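/- Let N : ℕ, let X : ℝ satisfy 0 ≤ X ≤ 1, and let f, g : Fin N → Bool. Then ∑_{h : Fin N → Bool} X^(d(f,h) + d(g,h)) / (1 + X^2)^N = (2*X / (1 + X^2))^(d(f,g)). (This is the content of Lemma 2: coarse graining the coupled decoherence functional D_qc over the classical histories multiplies the unitary decoherence functional D_q(Cyl(Φⁿ); Cyl(Φ̄ⁿ)) by the environmental-decoherence suppression factor (2X/(1+X²))^(d(Φⁿ,Φ̄ⁿ)).) -/

import Mathlib

/-- Hamming distance: the number of indices on which two configurations differ. -/
def hamming {N : ℕ} (f g : Fin N → Bool) : ℕ :=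
  (Finset.univ.filter fun i => f i ≠ g i).card

/-!
The weight `x ^ d(f, h) * y ^ d(g, h)` is a product over the indices `i` of factors depending only
on the letter `h i`, so its sum over all words `h` is a product of sums over the alphabet. For an
alphabet of `q` letters the factor at `i` is `1 + (q - 1) * (x * y)` if `f i = g i`, and
`x + y + (q - 2) * (x * y)` otherwise, so the product depends on `f` and `g` only through `d(f, g)`.
Over `Bool` with `x = y = X` the two factors are `1 + X ^ 2` and `2 * X`.
-/

theorem hamming_eq_hammingDist {N : ℕ} (f g : Fin N → Bool) : hamming f g = hammingDist f g :=
  rfl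

theorem prod_ite_eq_pow_mul_pow_hammingDist {ι M : Type*} {α : ι → Type*} [Fintype ι]
    [∀ i, DecidableEq (α i)] [CommMonoid M] (a b : M) (f g : ∀ i, α i) :
    ∏ i, (if f i = g i then a else b) =
      a ^ (Fintype.card ι - hammingDist f g) * b ^ hammingDist f g := by
  have card_agree : Finset.card {i | f i = g i} = Fintype.card ι - hammingDist f g :=
    Nat.eq_sub_of_add_eq (Finset.card_filter_add_card_filter_not fun i => f i = g i)
  rw [Finset.prod_ite, Finset.prod_const, Finset.prod_const, card_agree, hammingDist]

theorem pow_hammingDist_eq_prod {ι M : Type*} {α : ι → Type*} [Fintype ι]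
    [∀ i, DecidableEq (α i)] [CommMonoid M] (a : M) (f g : ∀ i, α i) :
    a ^ hammingDist f g = ∏ i, if f i = g i then 1 else a := by
  rw [prod_ite_eq_pow_mul_pow_hammingDist, one_pow, one_mul]

section Alphabet

variable {α R : Type*} [Fintype α] [DecidableEq α] [CommRing R]

theorem sum_ite_eq_mul_ite_eq (x y : R) (a b : α) :
    ∑ c, (if a = c then 1 else x) * (if b = c then 1 else y) =
      if a = b then 1 + (Fintype.card α - 1) * (x * y)
      else x + y + (Fintype.card α - 2) * (x * y) := by
  have expand (c : α) : (if a = c then 1 else x) * (if b = c then 1 else y) =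
      x * y + (if a = c then (1 - x) * y else 0) + (if b = c then x * (1 - y) else 0) +
        if a = c then (if a = b then (1 - x) * (1 - y) else 0) else 0 := by
    by_cases hac : a = c
    · subst hac
      simp only [if_true, eq_comm (a := b)]
      split_ifs <;> ring
    · simp only [hac, if_false]
      split_ifs <;> ring
  simp only [expand, Finset.sum_add_distrib, Finset.sum_ite_eq, Finset.mem_univ, if_true,
    Finset.sum_const, Finset.card_univ, nsmul_eq_mul]
  split_ifs <;> ring

theorem sum_pow_hammingDist_mul_pow_hammingDist {ι : Type*} [Fintype ι] [DecidableEq ι]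
    (x y : R) (f g : ι → α) :
    ∑ h : ι → α, x ^ hammingDist f h * y ^ hammingDist g h =
      (1 + (Fintype.card α - 1) * (x * y)) ^ (Fintype.card ι - hammingDist f g) *
        (x + y + (Fintype.card α - 2) * (x * y)) ^ hammingDist f g := by
  calc
    _ = ∑ h : ι → α, ∏ i, (if f i = h i then 1 else x) * (if g i = h i then 1 else y) := by
      simp only [pow_hammingDist_eq_prod, Finset.prod_mul_distrib]
    _ = ∏ i, ∑ c, (if f i = c then 1 else x) * (if g i = c then 1 else y) :=
      (Fintype.prod_sum fun i c => (if f i = c then 1 else x) * (if g i = c then 1 else y)).symm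
    _ = _ := by
      simp only [sum_ite_eq_mul_ite_eq, prod_ite_eq_pow_mul_pow_hammingDist]

end Alphabet

theorem sum_hamming_weight_normalized_general {ι α K : Type*} [Fintype ι] [DecidableEq ι]
    [Fintype α] [DecidableEq α] [Field K] {x y : K}
    (hxy : 1 + (Fintype.card α - 1) * (x * y) ≠ 0) (f g : ι → α) :
    ∑ h : ι → α, x ^ hammingDist f h * y ^ hammingDist g h /
        (1 + (Fintype.card α - 1) * (x * y)) ^ Fintype.card ι =
      ((x + y + (Fintype.card α - 2) * (x * y)) / (1 + (Fintype.card α - 1) * (x * y))) ^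
        hammingDist f g := by
  rw [← Finset.sum_div, sum_pow_hammingDist_mul_pow_hammingDist,
    pow_sub₀ _ hxy hammingDist_le_card_fintype, mul_assoc,
    mul_div_cancel_left₀ _ (pow_ne_zero _ hxy), inv_mul_eq_div, div_pow]

/-- Lemma 2: coarse graining the coupled decoherence functional over the classical histories
produces the environmental-decoherence suppression factor `(2X/(1+X²))^{d(f,g)}`. -/
theorem sum_hamming_weight_normalized (N : ℕ) (X : ℝ) (hX0 : 0 ≤ X) (hX1 : X ≤ 1)
    (f g : Fin N → Bool) :
    ∑ h : Fin N → Bool, X ^ (hamming f h + hamming g h) / (1 + X ^ 2) ^ N =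
      (2 * X / (1 + X ^ 2)) ^ hamming f g := by
  have two_sub_one : (2 : ℝ) - 1 = 1 := by norm_num
  simpa [hamming_eq_hammingDist, pow_add, sq, two_mul, two_sub_one] using
    sum_hamming_weight_normalized_general (x := X) (y := X) (by norm_num; positivity) f g
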